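/- arXiv:2208.06535 — 4 statements merged into one kernel-verified Lean document; each statement's English description precedes it below -/
import Mathlib

section
/- Let (Ω, 𝓕, P) be a probability space and let η, X : Ω → ℝ be nonnegative random variables. Then ∫₀¹ q_η(1−p) · q_X(p) dp ≤ E[η·X], where both sides are interpreted as Lebesgue integrals with values in [0, ∞]. (This is the 'minimum' side of the Hardy–Littlewood inequality, Lemma 2.2 of the paper.) -/
open MeasureTheory Set

/-- The quantile function of a Borel measure `μ` on `ℝ`:
`q_μ(p) = inf {x | p ≤ μ((-∞, x])}`. -/
noncomputable def quantile (μ : Measure ℝ) (p : ℝ) : ℝ :=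
  sInf {x : ℝ | p ≤ (μ (Iic x)).toReal}

/-!
Since `(a b)⁺ = a⁺ b⁺ + a⁻ b⁻`, and the integral of a product of positive parts is a double
layer-cake integral of joint tail probabilities, it suffices to compare joint tails. Where
`q_η (1 - p) > s` and `q_X p > t`, the point `p` lies between `1 - P (X > t)` and `P (η > s)`,
an interval of length `P (η > s) + P (X > t) - 1 ≤ P (η > s, X > t)`. Lower tails obey the
mirrored estimate.
-/

open ProbabilityTheory

section LayerCake

variable {α β : Type*} [MeasurableSpace α] [MeasurableSpace β] {μ : Measure α} {ν : Measure β}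

lemma lintegral_ofReal_eq_lintegral_meas_lt {f : α → ℝ} (hf : AEMeasurable f μ) :
    ∫⁻ a, ENNReal.ofReal (f a) ∂μ = ∫⁻ s in Ioi 0, μ {a | s < f a} := by
  calc ∫⁻ a, ENNReal.ofReal (f a) ∂μ
      = ∫⁻ a, ENNReal.ofReal (max (f a) 0) ∂μ := by
        simp only [ENNReal.ofReal_max, ENNReal.ofReal_zero, zero_le, sup_of_le_left]
    _ = ∫⁻ s in Ioi 0, μ {a | s < max (f a) 0} :=
        lintegral_eq_lintegral_meas_lt μ (ae_of_all μ fun a => le_max_right (f a) 0)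
          (hf.max aemeasurable_const)
    _ = ∫⁻ s in Ioi 0, μ {a | s < f a} :=
        setLIntegral_congr_fun measurableSet_Ioi fun s hs => by
          simp only [lt_max_iff, (mem_Ioi.1 hs).not_gt, or_false]

lemma lintegral_ofReal_mul_ofReal_eq_lintegral_meas_lt {f g : α → ℝ} (hf : AEMeasurable f μ)
    (hg : AEMeasurable g μ) :
    ∫⁻ a, ENNReal.ofReal (f a) * ENNReal.ofReal (g a) ∂μ =
      ∫⁻ s in Ioi 0, ∫⁻ t in Ioi 0, μ {a | s < f a ∧ t < g a} := by
  have hlevel (s : ℝ) : NullMeasurableSet {a | s < f a} μ :=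
    nullMeasurableSet_lt aemeasurable_const hf
  calc ∫⁻ a, ENNReal.ofReal (f a) * ENNReal.ofReal (g a) ∂μ
      = ∫⁻ a, ENNReal.ofReal (f a) ∂μ.withDensity fun a => ENNReal.ofReal (g a) := by
        simp only [lintegral_withDensity_eq_lintegral_mul₀ hg.ennreal_ofReal hf.ennreal_ofReal,
          Pi.mul_apply, mul_comm]
    _ = ∫⁻ s in Ioi 0, ∫⁻ a in {a | s < f a}, ENNReal.ofReal (g a) ∂μ := by
        simp only [lintegral_ofReal_eq_lintegral_meas_lt
          (hf.mono_ac (withDensity_absolutelyContinuous μ _)), withDensity_apply₀ _ (hlevel _)]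
    _ = ∫⁻ s in Ioi 0, ∫⁻ t in Ioi 0, μ {a | s < f a ∧ t < g a} := by
        simp only [lintegral_ofReal_eq_lintegral_meas_lt hg.restrict,
          Measure.restrict_apply₀' (hlevel _), inter_comm, ofPred_and]

lemma lintegral_ofReal_mul_ofReal_le_of_meas_lt_le {f g : α → ℝ} {f' g' : β → ℝ}
    (hf : AEMeasurable f μ) (hg : AEMeasurable g μ) (hf' : AEMeasurable f' ν)
    (hg' : AEMeasurable g' ν)
    (htail : ∀ s t, 0 < s → 0 < t → μ {a | s < f a ∧ t < g a} ≤ ν {b | s < f' b ∧ t < g' b}) :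
    ∫⁻ a, ENNReal.ofReal (f a) * ENNReal.ofReal (g a) ∂μ ≤
      ∫⁻ b, ENNReal.ofReal (f' b) * ENNReal.ofReal (g' b) ∂ν := by
  rw [lintegral_ofReal_mul_ofReal_eq_lintegral_meas_lt hf hg,
    lintegral_ofReal_mul_ofReal_eq_lintegral_meas_lt hf' hg']
  exact setLIntegral_mono' measurableSet_Ioi fun s hs =>
    setLIntegral_mono' measurableSet_Ioi fun t ht => htail s t hs ht

lemma ofReal_mul_eq_add_ofReal_neg_mul (a b : ℝ) :
    ENNReal.ofReal (a * b) =
      ENNReal.ofReal a * ENNReal.ofReal b + ENNReal.ofReal (-a) * ENNReal.ofReal (-b) := by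
  rcases le_total 0 a with ha | ha
  · rw [ENNReal.ofReal_mul ha, ENNReal.ofReal_of_nonpos (neg_nonpos.2 ha), zero_mul, add_zero]
  · rw [← neg_mul_neg, ENNReal.ofReal_mul (neg_nonneg.2 ha), ENNReal.ofReal_of_nonpos ha,
      zero_mul, zero_add]

lemma lintegral_ofReal_mul_le_of_meas_le {f g : α → ℝ} {f' g' : β → ℝ}
    (hf : AEMeasurable f μ) (hg : AEMeasurable g μ) (hf' : AEMeasurable f' ν)
    (hg' : AEMeasurable g' ν)
    (hupper : ∀ s t, 0 < s → 0 < t → μ {a | s < f a ∧ t < g a} ≤ ν {b | s < f' b ∧ t < g' b})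
    (hlower : ∀ s t, s < 0 → t < 0 → μ {a | f a < s ∧ g a < t} ≤ ν {b | f' b < s ∧ g' b < t}) :
    ∫⁻ a, ENNReal.ofReal (f a * g a) ∂μ ≤ ∫⁻ b, ENNReal.ofReal (f' b * g' b) ∂ν := by
  simp only [ofReal_mul_eq_add_ofReal_neg_mul]
  rw [lintegral_add_left' (hf.ennreal_ofReal.fun_mul hg.ennreal_ofReal),
    lintegral_add_left' (hf'.ennreal_ofReal.fun_mul hg'.ennreal_ofReal)]
  refine add_le_add (lintegral_ofReal_mul_ofReal_le_of_meas_lt_le hf hg hf' hg' hupper)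
    (lintegral_ofReal_mul_ofReal_le_of_meas_lt_le hf.neg hg.neg hf'.neg hg'.neg
      fun s t hs ht => ?_)
  simpa only [Pi.neg_apply, lt_neg] using hlower (-s) (-t) (neg_neg_of_pos hs) (neg_neg_of_pos ht)

end LayerCake

section Quantile

variable {μ : Measure ℝ} [IsProbabilityMeasure μ] {p x : ℝ}

lemma bddBelow_setOf_le_measure_Iic (hp : 0 < p) :
    BddBelow {x : ℝ | p ≤ (μ (Iic x)).toReal} := by
  obtain ⟨b, hb⟩ := ((tendsto_cdf_atBot μ).eventually (gt_mem_nhds hp)).exists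
  refine ⟨b, fun x hx => le_of_not_ge fun hxb => ?_⟩
  have hpx : p ≤ cdf μ x := hx.trans_eq (cdf_eq_real μ x).symm
  exact hb.not_ge (hpx.trans (monotone_cdf μ hxb))

lemma nonempty_setOf_le_measure_Iic (hp : p < 1) :
    {x : ℝ | p ≤ (μ (Iic x)).toReal}.Nonempty := by
  obtain ⟨x, hx⟩ := ((tendsto_cdf_atTop μ).eventually (lt_mem_nhds hp)).exists
  exact ⟨x, hx.le.trans_eq (cdf_eq_real μ x)⟩

variable (μ) in
lemma monotoneOn_quantile : MonotoneOn (quantile μ) (Ioo 0 1) := fun _ hp _ hr hpr =>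
  csInf_le_csInf (bddBelow_setOf_le_measure_Iic hp.1) (nonempty_setOf_le_measure_Iic hr.2)
    fun _ hx => hpr.trans hx

variable (μ) in
lemma antitoneOn_quantile_one_sub : AntitoneOn (fun p => quantile μ (1 - p)) (Ioo 0 1) :=
  fun _ hp _ hr hpr => monotoneOn_quantile μ (Ioo.one_sub_mem hr) (Ioo.one_sub_mem hp)
    (sub_le_sub_left hpr 1)

lemma one_sub_le_measureReal_Ioi_of_lt_quantile (hp : 0 < p) (h : x < quantile μ p) :
    1 - p ≤ μ.real (Ioi x) := by
  have hlt : μ.real (Iic x) < p :=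
    lt_of_not_ge fun hx => h.not_ge (csInf_le (bddBelow_setOf_le_measure_Iic hp) hx)
  rw [← compl_Iic, probReal_compl_eq_one_sub measurableSet_Iic]
  exact sub_le_sub_left hlt.le 1

lemma le_measureReal_Iio_of_quantile_lt (hp : p < 1) (h : quantile μ p < x) :
    p ≤ μ.real (Iio x) := by
  obtain ⟨y, hy, hyx⟩ := exists_lt_of_csInf_lt (nonempty_setOf_le_measure_Iic hp) h
  exact le_trans hy (measureReal_mono (Iic_subset_Iio.2 hyx))

end Quantile

section Antithetic

variable {Ω : Type*} [MeasurableSpace Ω] {P : Measure Ω} [IsProbabilityMeasure P]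

lemma volume_le_measure_inter_of_forall_le {A B : Set Ω} {T : Set ℝ} (hB : NullMeasurableSet B P)
    (hTA : ∀ p ∈ T, p ≤ P.real A) (hTB : ∀ p ∈ T, 1 - p ≤ P.real B) :
    volume T ≤ P (A ∩ B) := by
  have hunion : P.real (A ∪ B) + P.real (A ∩ B) = P.real A + P.real B :=
    measureReal_union_add_inter₀ hB
  have hone : P.real (A ∪ B) ≤ 1 := measureReal_le_one
  calc volume T
      ≤ volume (Icc (1 - P.real B) (P.real A)) :=
        measure_mono fun p hp => ⟨sub_le_comm.1 (hTB p hp), hTA p hp⟩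
    _ = ENNReal.ofReal (P.real A - (1 - P.real B)) := Real.volume_Icc
    _ ≤ ENNReal.ofReal (P.real (A ∩ B)) := ENNReal.ofReal_le_ofReal (by linarith)
    _ = P (A ∩ B) := ofReal_measureReal

variable {η X : Ω → ℝ}

lemma volume_lt_quantile_le_measure_lt (hη : AEMeasurable η P) (hX : AEMeasurable X P) (s t : ℝ) :
    volume.restrict (Ioo 0 1) {p | s < quantile (P.map η) (1 - p) ∧ t < quantile (P.map X) p} ≤
      P {ω | s < η ω ∧ t < X ω} := by
  have := Measure.isProbabilityMeasure_map hη
  have := Measure.isProbabilityMeasure_map hX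
  rw [Measure.restrict_apply' measurableSet_Ioo]
  refine volume_le_measure_inter_of_forall_le (nullMeasurableSet_lt aemeasurable_const hX) ?_ ?_
  · rintro p ⟨⟨hs, -⟩, -, hp1⟩
    have h := one_sub_le_measureReal_Ioi_of_lt_quantile (sub_pos.2 hp1) hs
    rwa [sub_sub_cancel, map_measureReal_apply_of_aemeasurable hη measurableSet_Ioi] at h
  · rintro p ⟨⟨-, ht⟩, hp0, -⟩
    have h := one_sub_le_measureReal_Ioi_of_lt_quantile hp0 ht
    rwa [map_measureReal_apply_of_aemeasurable hX measurableSet_Ioi] at h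

lemma volume_quantile_lt_le_measure_lt (hη : AEMeasurable η P) (hX : AEMeasurable X P) (s t : ℝ) :
    volume.restrict (Ioo 0 1) {p | quantile (P.map η) (1 - p) < s ∧ quantile (P.map X) p < t} ≤
      P {ω | η ω < s ∧ X ω < t} := by
  have := Measure.isProbabilityMeasure_map hη
  have := Measure.isProbabilityMeasure_map hX
  rw [Measure.restrict_apply' measurableSet_Ioo]
  refine (volume_le_measure_inter_of_forall_le (A := {ω | X ω < t}) (B := {ω | η ω < s})
    (nullMeasurableSet_lt hη aemeasurable_const) ?_ ?_).trans_eq (congrArg P (inter_comm _ _))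
  · rintro p ⟨⟨-, ht⟩, -, hp1⟩
    have h := le_measureReal_Iio_of_quantile_lt hp1 ht
    rwa [map_measureReal_apply_of_aemeasurable hX measurableSet_Iio] at h
  · rintro p ⟨⟨hs, -⟩, hp0, -⟩
    have h := le_measureReal_Iio_of_quantile_lt (sub_lt_self 1 hp0) hs
    rwa [map_measureReal_apply_of_aemeasurable hη measurableSet_Iio] at h

end Antithetic

theorem hardy_littlewood_lower_general {Ω : Type*} [MeasurableSpace Ω]
    (P : Measure Ω) [IsProbabilityMeasure P] {η X : Ω → ℝ}
    (hη : AEMeasurable η P) (hX : AEMeasurable X P) :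
    ∫⁻ p in Ioo (0 : ℝ) 1,
        ENNReal.ofReal (quantile (P.map η) (1 - p) * quantile (P.map X) p) ≤
      ∫⁻ ω, ENNReal.ofReal (η ω * X ω) ∂P := by
  have := Measure.isProbabilityMeasure_map hη
  have := Measure.isProbabilityMeasure_map hX
  exact lintegral_ofReal_mul_le_of_meas_le
    (aemeasurable_restrict_of_antitoneOn measurableSet_Ioo (antitoneOn_quantile_one_sub _))
    (aemeasurable_restrict_of_monotoneOn measurableSet_Ioo (monotoneOn_quantile _)) hη hX
    (fun s t _ _ => volume_lt_quantile_le_measure_lt hη hX s t)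
    (fun s t _ _ => volume_quantile_lt_le_measure_lt hη hX s t)

/-- The 'minimum' side of the Hardy–Littlewood inequality:
for nonnegative random variables `η, X`,
`∫₀¹ q_η(1-p) q_X(p) dp ≤ E[η X]`, in `[0, ∞]`. -/
theorem hardy_littlewood_lower {Ω : Type*} [MeasurableSpace Ω]
    (P : Measure Ω) [IsProbabilityMeasure P]
    (η X : Ω → ℝ) (hη : Measurable η) (hX : Measurable X)
    (hη0 : ∀ ω, 0 ≤ η ω) (hX0 : ∀ ω, 0 ≤ X ω) :
    ∫⁻ p in Ioo (0:ℝ) 1,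
        ENNReal.ofReal (quantile (P.map η) (1 - p) * quantile (P.map X) p)
      ≤ ∫⁻ ω, ENNReal.ofReal (η ω * X ω) ∂P :=
  hardy_littlewood_lower_general P hη.aemeasurable hX.aemeasurable
end

section
/- Let X be a real random variable on a probability space (Ω, 𝓕, P) whose cumulative distribution function F is continuous. Then the law of the random variable F(X) is the uniform distribution on [0, 1], i.e., the pushforward of P under ω ↦ F(X(ω)) is Lebesgue measure restricted to [0, 1]. -/
open MeasureTheory Set

/-!
Write `F x = μ (Iic x)` and let `ν` be the law of `F` under `μ`. Monotonicity alone gives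
`{F < F x} ⊆ Iic x ⊆ {F ≤ F x}`, i.e. `ν (Iio t) ≤ t ≤ ν (Iic t)` for every value `t` of `F`.
Continuity makes every `t` strictly between `0` and the total mass such a value, and these
sandwich bounds already determine `ν`: letting `t` decrease to `s` in
`ν (Iic s) ≤ ν (Iio t) ≤ t` gives `ν (Iic s) = s`.
-/

open Filter Topology

section DistributionFunction

variable {α : Type*} [LinearOrder α] [MeasurableSpace α] (μ : Measure α) [IsFiniteMeasure μ]

lemma monotone_measureReal_Iic : Monotone fun x => μ.real (Iic x) :=
  fun _ _ hxy => measureReal_mono (Iic_subset_Iic.2 hxy)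

lemma measureReal_setOf_measureReal_Iic_lt_le (x : α) :
    μ.real {y | μ.real (Iic y) < μ.real (Iic x)} ≤ μ.real (Iic x) :=
  measureReal_mono fun _ hy => ((monotone_measureReal_Iic μ).reflect_lt hy).le

lemma le_measureReal_setOf_measureReal_Iic_le (x : α) :
    μ.real (Iic x) ≤ μ.real {y | μ.real (Iic y) ≤ μ.real (Iic x)} :=
  measureReal_mono fun _ hy => monotone_measureReal_Iic μ hy

lemma tendsto_measureReal_Iic_atTop [(atTop : Filter α).IsCountablyGenerated] :
    Tendsto (fun x => μ.real (Iic x)) atTop (𝓝 (μ.real univ)) :=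
  (ENNReal.tendsto_toReal (measure_ne_top μ univ)).comp (tendsto_measure_Iic_atTop μ)

variable [TopologicalSpace α] [OpensMeasurableSpace α] [ClosedIicTopology α] [NoMinOrder α]
  [(atBot : Filter α).IsCountablyGenerated]

lemma tendsto_measureReal_Iic_atBot [Nonempty α] :
    Tendsto (fun x => μ.real (Iic x)) atBot (𝓝 0) := by
  have h_inter : ⋂ x : α, Iic x = ∅ :=
    eq_empty_of_forall_notMem fun y hy =>
      let ⟨x, hxy⟩ := exists_lt y
      hxy.not_ge (mem_iInter.1 hy x)
  have h_measure : Tendsto (fun x => μ (Iic x)) atBot (𝓝 0) := by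
    rw [← measure_empty (μ := μ), ← h_inter]
    exact tendsto_measure_iInter_atBot (fun _ => measurableSet_Iic.nullMeasurableSet)
      monotone_Iic ⟨Classical.arbitrary α, measure_ne_top μ _⟩
  exact (ENNReal.tendsto_toReal ENNReal.zero_ne_top).comp h_measure

variable [PreconnectedSpace α] [(atTop : Filter α).IsCountablyGenerated] {μ}

lemma exists_measureReal_Iic_eq (hcont : Continuous fun x => μ.real (Iic x)) {t : ℝ}
    (ht : t ∈ Ioo 0 (μ.real univ)) : ∃ x, μ.real (Iic x) = t := by
  obtain ⟨y, -⟩ := nonempty_of_measureReal_ne_zero (ht.1.trans ht.2).ne'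
  have : Nonempty α := ⟨y⟩
  have exists_le : ∃ a, μ.real (Iic a) ≤ t :=
    ((tendsto_measureReal_Iic_atBot μ).eventually_le_const ht.1).exists
  have exists_ge : ∃ b, t ≤ μ.real (Iic b) :=
    ((tendsto_measureReal_Iic_atTop μ).eventually_const_le ht.2).exists
  exact mem_range_of_exists_le_of_exists_ge hcont exists_le exists_ge

end DistributionFunction

lemma measureReal_restrict_Icc_zero_Iic (m s : ℝ) :
    (volume.restrict (Icc 0 m)).real (Iic s) = max (min s m) 0 := by
  have h_inter : Iic s ∩ Icc 0 m = Icc 0 (min s m) := by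
    ext x
    simp only [mem_inter_iff, mem_Iic, mem_Icc, le_min_iff]
    tauto
  rw [measureReal_restrict_apply measurableSet_Iic, h_inter, Real.volume_real_Icc, sub_zero]

section Sandwich

variable {ν : Measure ℝ} [IsFiniteMeasure ν]

lemma measureReal_Iic_le_max_min
    (h_Iio : ∀ t ∈ Ioo 0 (ν.real univ), ν.real (Iio t) ≤ t) (s : ℝ) :
    ν.real (Iic s) ≤ max (min s (ν.real univ)) 0 := by
  refine le_of_forall_gt_imp_ge_of_dense fun t ht => ?_
  obtain ⟨h_min, h_pos⟩ := max_lt_iff.1 ht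
  rcases le_or_gt (ν.real univ) t with h_univ | h_univ
  · exact (measureReal_mono (subset_univ _)).trans h_univ
  · have hst : s < t := (min_lt_iff.1 h_min).resolve_right h_univ.not_gt
    calc ν.real (Iic s) ≤ ν.real (Iio t) := measureReal_mono (Iic_subset_Iio.2 hst)
      _ ≤ t := h_Iio t ⟨h_pos, h_univ⟩

lemma max_min_le_measureReal_Iic
    (h_Iic : ∀ t ∈ Ioo 0 (ν.real univ), t ≤ ν.real (Iic t)) (s : ℝ) :
    max (min s (ν.real univ)) 0 ≤ ν.real (Iic s) := by
  refine le_of_forall_lt_imp_le_of_dense fun t ht => ?_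
  rcases le_or_gt t 0 with h_nonpos | h_pos
  · exact h_nonpos.trans measureReal_nonneg
  · obtain ⟨hts, h_univ⟩ := lt_min_iff.1 ((lt_max_iff.1 ht).resolve_right h_pos.not_gt)
    calc t ≤ ν.real (Iic t) := h_Iic t ⟨h_pos, h_univ⟩
      _ ≤ ν.real (Iic s) := measureReal_mono (Iic_subset_Iic.2 hts.le)

theorem eq_volume_restrict_Icc_of_measureReal_Iio_le_of_le_measureReal_Iic
    (h_Iio : ∀ t ∈ Ioo 0 (ν.real univ), ν.real (Iio t) ≤ t)
    (h_Iic : ∀ t ∈ Ioo 0 (ν.real univ), t ≤ ν.real (Iic t)) :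
    ν = volume.restrict (Icc 0 (ν.real univ)) := by
  refine Measure.ext_of_Iic _ _ fun s => ?_
  rw [← measureReal_eq_measureReal_iff, measureReal_restrict_Icc_zero_Iic]
  exact le_antisymm (measureReal_Iic_le_max_min h_Iio s)
    (max_min_le_measureReal_Iic h_Iic s)

end Sandwich

section ProbabilityIntegralTransform

variable {α : Type*} [LinearOrder α] [TopologicalSpace α] [ClosedIicTopology α]
  [PreconnectedSpace α] [NoMinOrder α] [(atBot : Filter α).IsCountablyGenerated]
  [(atTop : Filter α).IsCountablyGenerated] [MeasurableSpace α] [OpensMeasurableSpace α]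

theorem map_measureReal_Iic_eq_volume_restrict_Icc {μ : Measure α} [IsFiniteMeasure μ]
    (hcont : Continuous fun x => μ.real (Iic x)) :
    μ.map (fun x => μ.real (Iic x)) = volume.restrict (Icc 0 (μ.real univ)) := by
  have h_univ : (μ.map fun x => μ.real (Iic x)).real univ = μ.real univ :=
    map_measureReal_apply hcont.measurable MeasurableSet.univ
  rw [← h_univ]
  refine eq_volume_restrict_Icc_of_measureReal_Iio_le_of_le_measureReal_Iic
    (fun t ht => ?_) (fun t ht => ?_)
  · obtain ⟨x, rfl⟩ := exists_measureReal_Iic_eq hcont (h_univ ▸ ht)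
    rw [map_measureReal_apply hcont.measurable measurableSet_Iio]
    exact measureReal_setOf_measureReal_Iic_lt_le μ x
  · obtain ⟨x, rfl⟩ := exists_measureReal_Iic_eq hcont (h_univ ▸ ht)
    rw [map_measureReal_apply hcont.measurable measurableSet_Iic]
    exact le_measureReal_setOf_measureReal_Iic_le μ x

theorem cdf_of_atomless_uniform_general {Ω : Type*} [MeasurableSpace Ω]
    (P : Measure Ω) [IsFiniteMeasure P] (X : Ω → α) (hX : AEMeasurable X P)
    (F : α → ℝ) (hF : F = fun x => (P.map X).real (Iic x)) (hcont : Continuous F) :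
    P.map (fun ω => F (X ω)) = volume.restrict (Icc 0 (P.real univ)) := by
  have h_law : P.map (fun ω => F (X ω)) = (P.map X).map F :=
    (AEMeasurable.map_map_of_aemeasurable hcont.aemeasurable hX).symm
  have h_mass : (P.map X).real univ = P.real univ :=
    map_measureReal_apply_of_aemeasurable hX MeasurableSet.univ
  subst hF
  rw [h_law, map_measureReal_Iic_eq_volume_restrict_Icc hcont, h_mass]

end ProbabilityIntegralTransform

/-- If the cdf `F` of a real random variable `X` is continuous, then `F(X)` is uniformly
distributed: the pushforward of `P` under `ω ↦ F(X(ω))` is Lebesgue measure on `[0, 1]`. -/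
theorem cdf_of_atomless_uniform {Ω : Type*} [MeasurableSpace Ω]
    (P : Measure Ω) [IsProbabilityMeasure P]
    (X : Ω → ℝ) (hX : Measurable X)
    (F : ℝ → ℝ) (hF : F = fun x => ((P.map X) (Iic x)).toReal)
    (hcont : Continuous F) :
    P.map (fun ω => F (X ω)) = (volume : Measure ℝ).restrict (Icc (0:ℝ) 1) := by
  simpa only [probReal_univ] using
    cdf_of_atomless_uniform_general P X hX.aemeasurable F hF hcont
end

section
/- Let T > 0. Let f : [0, T] × ℝ → ℝ have continuous partial derivatives f_t and f_y, and let h : [0, T] × ℝ → ℝ be continuous with continuous partial derivatives h_y and h_yy. Suppose the compatibility condition 2 f_y(t, y) h(t, y) + 2 f(t, y) h_y(t, y) − h_yy(t, y) = −2 f_t(t, y) holds for all (t, y) ∈ [0, T] × ℝ. Define A(t) := ∫₀ᵗ [2 f(s, 0) h(s, 0) − h_y(s, 0)] ds and φ(t, y) := e^{A(t)} ∫₀ʸ e^{−2 ∫₀ᶻ f(t, x) dx} dz − ∫₀ᵗ e^{A(u)} h(u, 0) du. Then φ satisfies the transport equation ∂φ/∂t (t, y) + (∂φ/∂y (t, y))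 · h(t, y) = 0 for all (t, y) ∈ [0, T] × ℝ. -/
open Set intervalIntegral

/-- `A(t) = ∫₀ᵗ [2 f(s,0) h(s,0) - h_y(s,0)] ds`. -/
noncomputable def Afun (f h hy : ℝ → ℝ → ℝ) (t : ℝ) : ℝ :=
  ∫ s in (0:ℝ)..t, (2 * f s 0 * h s 0 - hy s 0)

/-- `φ(t,y) = e^{A(t)} ∫₀ʸ e^{-2∫₀ᶻ f(t,x) dx} dz - ∫₀ᵗ e^{A(u)} h(u,0) du`. -/
noncomputable def phiFun (f h hy : ℝ → ℝ → ℝ) (t y : ℝ) : ℝ :=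
  Real.exp (Afun f h hy t) * (∫ z in (0:ℝ)..y, Real.exp (-2 * ∫ x in (0:ℝ)..z, f t x))
    - ∫ u in (0:ℝ)..t, Real.exp (Afun f h hy u) * h u 0

/-
The spatial derivative `φ_y = e^{A(t)} e^{-2∫₀ʸ f(t,x) dx}` is a density carried by the velocity
field `h`. Indeed the compatibility condition says `∂_y (2 f h - h_y) = -2 f_t`; integrating it from
`0` to `y` yields `∂_t φ_y = φ_y (2 f h - h_y)`, while the product rule yields
`∂_y (φ_y h) = -φ_y (2 f h - h_y)`. Integrating the resulting continuity equation
`∂_t φ_y + ∂_y (φ_y h) = 0` over `[0, y]` leaves the boundary term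
`φ_y(t,0) h(t,0) = e^{A(t)} h(t,0)`, which the last integral in the definition of `φ` cancels.
-/

open Filter Function MeasureTheory Topology

section Calculus

variable {E : Type*} [NormedAddCommGroup E] [NormedSpace ℝ E] {S : Set ℝ} {t : ℝ}

theorem hasDerivWithinAt_integral_of_continuousOn [CompleteSpace E] (hS : S.OrdConnected)
    {g : ℝ → E} (hg : ContinuousOn g S) {a : ℝ} (ha : a ∈ S) (ht : t ∈ S) :
    HasDerivWithinAt (fun u ↦ ∫ s in a..u, g s) (g t) S t := by
  have : (𝓝[S] t).IsMeasurablyGenerated := hS.measurableSet.nhdsWithin_isMeasurablyGenerated t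
  have : TendstoIxxClass Ioc (𝓟 S) (𝓟 S) := tendstoIxxClass_of_subset fun _ _ ↦ Ioc_subset_Icc_self
  have : FTCFilter t (𝓝[S] t) (𝓝[S] t) :=
    { pure_le := pure_le_nhdsWithin ht
      le_nhds := inf_le_left }
  exact integral_hasDerivWithinAt_right (hg.mono (hS.uIcc_subset ha ht)).intervalIntegrable
    (hg.stronglyMeasurableAtFilter_nhdsWithin hS.measurableSet t) (hg t ht)

theorem eventually_forall_norm_sub_sub_smul_le {X : Type*} [TopologicalSpace X] {K : Set X}
    (hK : IsCompact K) (hS : S.OrdConnected) {F F' : ℝ → X → E}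
    (hF : ∀ s ∈ S, ∀ x ∈ K, HasDerivWithinAt (F · x) (F' s x) S s)
    (hF' : ContinuousOn F'.uncurry (S ×ˢ K)) (ht : t ∈ S) {ε : ℝ} (hε : 0 < ε) :
    ∀ᶠ s in 𝓝[S] t, ∀ x ∈ K, ‖F s x - F t x - (s - t) • F' t x‖ ≤ ε * ‖s - t‖ := by
  obtain ⟨V, hV, hV_close⟩ := hK.mem_uniformity_of_prod hF' ht (Metric.dist_mem_uniformity hε)
  have huIcc : ∀ᶠ s in 𝓝[S] t, uIcc t s ⊆ V ∩ S :=
    ((tendsto_const_pure.mono_right (pure_le_nhdsWithin ht)).uIcc tendsto_id).eventually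
      (eventually_smallSets_subset.2 (inter_mem hV self_mem_nhdsWithin))
  filter_upwards [huIcc] with s hs x hx
  have hderiv : ∀ r ∈ uIcc t s,
      HasDerivWithinAt (fun r ↦ F r x - r • F' t x) (F' r x - F' t x) (uIcc t s) r := fun r hr ↦ by
    simpa only [one_smul] using! ((hF r (hs hr).2 x hx).mono fun q hq ↦ (hs hq).2).sub
      ((hasDerivWithinAt_id r _).smul_const (F' t x))
  have hbound : ∀ r ∈ uIcc t s, ‖F' r x - F' t x‖ ≤ ε := fun r hr ↦ by
    simpa only [← dist_eq_norm] using (hV_close r (hs hr).1 x hx).le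
  have hmvt := (convex_uIcc t s).norm_image_sub_le_of_norm_hasDerivWithin_le hderiv hbound
    left_mem_uIcc right_mem_uIcc
  convert hmvt using 2
  module

theorem hasDerivWithinAt_integral_param (hS : S.OrdConnected) {F F' : ℝ → ℝ → E} {a b : ℝ}
    (hF_int : ∀ s ∈ S, IntervalIntegrable (F s) volume a b)
    (hF : ∀ s ∈ S, ∀ x ∈ uIcc a b, HasDerivWithinAt (F · x) (F' s x) S s)
    (hF' : ContinuousOn F'.uncurry (S ×ˢ uIcc a b)) (ht : t ∈ S) :
    HasDerivWithinAt (fun s ↦ ∫ x in a..b, F s x) (∫ x in a..b, F' t x) S t := by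
  have hF'_int : ∀ c : ℝ, IntervalIntegrable (fun x ↦ c • F' t x) volume a b :=
    fun c ↦ ((hF'.uncurry_left t ht).const_smul c).intervalIntegrable
  rw [hasDerivWithinAt_iff_isLittleO, Asymptotics.isLittleO_iff]
  intro c hc
  have hδ : 0 < c / (|b - a| + 1) := by positivity
  filter_upwards [eventually_forall_norm_sub_sub_smul_le isCompact_uIcc hS hF hF' ht hδ,
    self_mem_nhdsWithin] with s hremainder hs
  calc
    ‖(∫ x in a..b, F s x) - (∫ x in a..b, F t x) - (s - t) • ∫ x in a..b, F' t x‖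
      = ‖∫ x in a..b, (F s x - F t x - (s - t) • F' t x)‖ := by
        rw [integral_sub ((hF_int s hs).sub (hF_int t ht)) (hF'_int (s - t)),
          integral_sub (hF_int s hs) (hF_int t ht), intervalIntegral.integral_smul]
    _ ≤ c / (|b - a| + 1) * ‖s - t‖ * |b - a| :=
        norm_integral_le_of_norm_le_const fun x hx ↦ hremainder x (uIoc_subset_uIcc hx)
    _ = c * ‖s - t‖ * (|b - a| / (|b - a| + 1)) := by ring
    _ ≤ c * ‖s - t‖ :=
        mul_le_of_le_one_right (by positivity) (div_le_one_of_le₀ (by linarith) (by positivity))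

theorem continuousOn_integral_param_primitive {X : Type*} [TopologicalSpace X] {P : Set X}
    {g : X → ℝ → E} (hg : ContinuousOn g.uncurry (P ×ˢ univ)) (a : ℝ) :
    ContinuousOn (fun p : X × ℝ ↦ ∫ x in a..p.2, g p.1 x) (P ×ˢ univ) := by
  have hg_subtype : Continuous (uncurry fun (s : P) x ↦ g s x) :=
    hg.comp_continuous (f := fun p : P × ℝ ↦ ((p.1 : X), p.2)) (by fun_prop)
      fun p ↦ ⟨p.1.2, mem_univ _⟩
  have hprimitive : Continuous fun p : P × ℝ ↦ ∫ x in a..p.2, g p.1 x :=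
    continuous_parametric_primitive_of_continuous hg_subtype
  rw [continuousOn_iff_continuous_domRestrict]
  exact hprimitive.comp (f := fun q : P ×ˢ (univ : Set ℝ) ↦ ((⟨q.1.1, q.2.1⟩ : P), q.1.2))
    (by fun_prop)

end Calculus

/-- The spatial derivative `φ_y(t,y) = e^{A(t)} e^{-2∫₀ʸ f(t,x) dx}` of `phiFun`, given by its
closed form. -/
noncomputable def phiDensity (f h hy : ℝ → ℝ → ℝ) (t y : ℝ) : ℝ :=
  Real.exp (Afun f h hy t) * Real.exp (-2 * ∫ x in (0 : ℝ)..y, f t x)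

/-- The rate `2 f h - h_y`: both the relative growth rate in time of `phiDensity` and, at `y = 0`,
the integrand of `Afun`. The argument `hy` stands for `h_y`. -/
def phiRate (f h hy : ℝ → ℝ → ℝ) (t y : ℝ) : ℝ :=
  2 * f t y * h t y - hy t y

section Transport

variable {S : Set ℝ} {f ft h hy : ℝ → ℝ → ℝ} {t : ℝ}

theorem phiDensity_zero (f h hy : ℝ → ℝ → ℝ) (t : ℝ) :
    phiDensity f h hy t 0 = Real.exp (Afun f h hy t) := by
  simp [phiDensity]

theorem phiFun_eq_integral_phiDensity_sub (f h hy : ℝ → ℝ → ℝ) (t y : ℝ) :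
    phiFun f h hy t y = (∫ z in (0 : ℝ)..y, phiDensity f h hy t z) -
      ∫ u in (0 : ℝ)..t, phiDensity f h hy u 0 * h u 0 := by
  simp only [phiFun, phiDensity_zero]
  simp only [phiDensity, intervalIntegral.integral_const_mul]

theorem continuousOn_phiRate (hf : ContinuousOn f.uncurry (S ×ˢ univ))
    (hh : ContinuousOn h.uncurry (S ×ˢ univ)) (hhy : ContinuousOn hy.uncurry (S ×ˢ univ)) :
    ContinuousOn (phiRate f h hy).uncurry (S ×ˢ univ) :=
  ((hf.const_mul 2).mul hh).sub hhy

theorem hasDerivWithinAt_Afun (hS : S.OrdConnected) (h0 : 0 ∈ S)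
    (hrate : ContinuousOn (phiRate f h hy · 0) S) (ht : t ∈ S) :
    HasDerivWithinAt (Afun f h hy) (phiRate f h hy t 0) S t :=
  hasDerivWithinAt_integral_of_continuousOn hS hrate h0 ht

theorem continuousOn_phiDensity (hf : ContinuousOn f.uncurry (S ×ˢ univ))
    (hA : ContinuousOn (Afun f h hy) S) :
    ContinuousOn (phiDensity f h hy).uncurry (S ×ˢ univ) :=
  (hA.comp continuousOn_fst fun _ hp ↦ hp.1).rexp.mul
    ((continuousOn_integral_param_primitive hf 0).const_mul (-2)).rexp

theorem phiRate_eq_sub_integral (hft : Continuous (ft t))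
    (hdiv : ∀ y, HasDerivAt (phiRate f h hy t) (-2 * ft t y) y) (y : ℝ) :
    phiRate f h hy t y = phiRate f h hy t 0 - 2 * ∫ x in (0 : ℝ)..y, ft t x := by
  have hftc := integral_eq_sub_of_hasDerivAt (a := 0) (b := y) (fun x _ ↦ hdiv x)
    ((hft.const_mul (-2)).intervalIntegrable 0 y)
  rw [intervalIntegral.integral_const_mul] at hftc
  linarith

theorem hasDerivWithinAt_phiDensity (hS : S.OrdConnected) (hf : ∀ s ∈ S, Continuous (f s))
    (hf_t : ∀ s ∈ S, ∀ y, HasDerivWithinAt (f · y) (ft s y) S s)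
    (hft : ContinuousOn ft.uncurry (S ×ˢ univ)) (ht : t ∈ S)
    (hA : HasDerivWithinAt (Afun f h hy) (phiRate f h hy t 0) S t)
    (hdiv : ∀ y, HasDerivAt (phiRate f h hy t) (-2 * ft t y) y) (y : ℝ) :
    HasDerivWithinAt (phiDensity f h hy · y) (phiDensity f h hy t y * phiRate f h hy t y) S t := by
  have hprimitive : HasDerivWithinAt (fun s ↦ ∫ x in (0 : ℝ)..y, f s x)
      (∫ x in (0 : ℝ)..y, ft t x) S t :=
    hasDerivWithinAt_integral_param hS (fun s hs ↦ (hf s hs).intervalIntegrable 0 y)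
      (fun s hs x _ ↦ hf_t s hs x) (hft.mono (prod_mono_right (subset_univ _))) ht
  refine (hA.exp.mul (hprimitive.const_mul (-2)).exp).congr_deriv ?_
  rw [phiRate_eq_sub_integral (continuousOn_univ.1 (hft.uncurry_left t ht)) hdiv y, phiDensity]
  ring

theorem hasDerivAt_phiDensity_mul (hf : Continuous (f t)) {y : ℝ}
    (hh_y : HasDerivAt (h t) (hy t y) y) :
    HasDerivAt (fun z ↦ phiDensity f h hy t z * h t z)
      (-(phiDensity f h hy t y * phiRate f h hy t y)) y := by
  have hprimitive := (hf.integral_hasStrictDerivAt 0 y).hasDerivAt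
  refine (((hprimitive.const_mul (-2)).exp.const_mul _).mul hh_y).congr_deriv ?_
  rw [phiDensity, phiRate]
  ring

theorem integral_phiDensity_mul_phiRate (hf : Continuous (f t))
    (hh_y : ∀ y, HasDerivAt (h t) (hy t y) y) (hhy : Continuous (hy t)) (y : ℝ) :
    ∫ z in (0 : ℝ)..y, phiDensity f h hy t z * phiRate f h hy t z =
      phiDensity f h hy t 0 * h t 0 - phiDensity f h hy t y * h t y := by
  have hdensity : Continuous (phiDensity f h hy t) :=
    ((continuous_primitive hf.intervalIntegrable 0).const_mul (-2)).rexp.const_mul _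
  have hh : Continuous (h t) := continuous_iff_continuousAt.2 fun z ↦ (hh_y z).continuousAt
  have hrate : Continuous (phiRate f h hy t) := ((hf.const_mul 2).mul hh).sub hhy
  have hftc := integral_eq_sub_of_hasDerivAt (a := 0) (b := y)
    (fun z _ ↦ hasDerivAt_phiDensity_mul hf (hh_y z))
    ((hdensity.mul hrate).neg.intervalIntegrable 0 y)
  rw [intervalIntegral.integral_neg] at hftc
  linarith

theorem phi_transport_equation_general (hS : S.OrdConnected) (h0 : 0 ∈ S)
    (hf : ContinuousOn f.uncurry (S ×ˢ univ))
    (hf_t : ∀ s ∈ S, ∀ y, HasDerivWithinAt (f · y) (ft s y) S s)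
    (hft : ContinuousOn ft.uncurry (S ×ˢ univ))
    (hh : ContinuousOn h.uncurry (S ×ˢ univ))
    (hh_y : ∀ s ∈ S, ∀ y, HasDerivAt (h s) (hy s y) y)
    (hhy : ContinuousOn hy.uncurry (S ×ˢ univ))
    (hdiv : ∀ s ∈ S, ∀ y, HasDerivAt (phiRate f h hy s) (-2 * ft s y) y)
    (ht : t ∈ S) (y : ℝ) :
    HasDerivWithinAt (phiFun f h hy · y) (-phiDensity f h hy t y * h t y) S t := by
  have hf_slice : ∀ s ∈ S, Continuous (f s) := fun s hs ↦ continuousOn_univ.1 (hf.uncurry_left s hs)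
  have hrate := continuousOn_phiRate hf hh hhy
  have hA : ∀ s ∈ S, HasDerivWithinAt (Afun f h hy) (phiRate f h hy s 0) S s :=
    fun s hs ↦ hasDerivWithinAt_Afun hS h0 (hrate.uncurry_right 0 (mem_univ 0)) hs
  have hdensity := continuousOn_phiDensity hf fun s hs ↦ (hA s hs).continuousWithinAt
  have hbulk : HasDerivWithinAt (fun s ↦ ∫ z in (0 : ℝ)..y, phiDensity f h hy s z)
      (∫ z in (0 : ℝ)..y, phiDensity f h hy t z * phiRate f h hy t z) S t :=
    hasDerivWithinAt_integral_param hS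
      (fun s hs ↦ ((hdensity.uncurry_left s hs).mono (subset_univ _)).intervalIntegrable)
      (fun s hs z _ ↦ hasDerivWithinAt_phiDensity hS hf_slice hf_t hft hs (hA s hs) (hdiv s hs) z)
      ((hdensity.mul hrate).mono (prod_mono_right (subset_univ _))) ht
  have hboundary : HasDerivWithinAt (fun s ↦ ∫ u in (0 : ℝ)..s, phiDensity f h hy u 0 * h u 0)
      (phiDensity f h hy t 0 * h t 0) S t :=
    hasDerivWithinAt_integral_of_continuousOn hS
      ((hdensity.uncurry_right 0 (mem_univ 0)).mul (hh.uncurry_right 0 (mem_univ 0))) h0 ht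
  simp only [phiFun_eq_integral_phiDensity_sub]
  refine (hbulk.sub hboundary).congr_deriv ?_
  rw [integral_phiDensity_mul_phiRate (hf_slice t ht) (hh_y t ht)
    (continuousOn_univ.1 (hhy.uncurry_left t ht))]
  ring

end Transport

/-- Under the compatibility condition `2 f_y h + 2 f h_y - h_yy = -2 f_t`, the function `φ`
satisfies the transport equation `φ_t + φ_y h = 0` on `[0,T] × ℝ`, where
`φ_y(t,y) = e^{A(t)} e^{-2∫₀ʸ f(t,x) dx}`. -/
theorem phi_transport_equation
    (T : ℝ) (hT : 0 < T)
    (f ft fy h hy hyy : ℝ → ℝ → ℝ)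
    (hf_cont : Continuous fun p : ℝ × ℝ => f p.1 p.2)
    (hf_t : ∀ t ∈ Icc (0:ℝ) T, ∀ y : ℝ,
      HasDerivWithinAt (fun s => f s y) (ft t y) (Icc (0:ℝ) T) t)
    (hf_y : ∀ t ∈ Icc (0:ℝ) T, ∀ y : ℝ, HasDerivAt (fun x => f t x) (fy t y) y)
    (hft_cont : ContinuousOn (fun p : ℝ × ℝ => ft p.1 p.2) (Icc (0:ℝ) T ×ˢ univ))
    (hfy_cont : ContinuousOn (fun p : ℝ × ℝ => fy p.1 p.2) (Icc (0:ℝ) T ×ˢ univ))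
    (hh_cont : Continuous fun p : ℝ × ℝ => h p.1 p.2)
    (hh_y : ∀ t ∈ Icc (0:ℝ) T, ∀ y : ℝ, HasDerivAt (fun x => h t x) (hy t y) y)
    (hh_yy : ∀ t ∈ Icc (0:ℝ) T, ∀ y : ℝ, HasDerivAt (fun x => hy t x) (hyy t y) y)
    (hhy_cont : ContinuousOn (fun p : ℝ × ℝ => hy p.1 p.2) (Icc (0:ℝ) T ×ˢ univ))
    (hhyy_cont : ContinuousOn (fun p : ℝ × ℝ => hyy p.1 p.2) (Icc (0:ℝ) T ×ˢ univ))
    (hcompat : ∀ t ∈ Icc (0:ℝ) T, ∀ y : ℝ,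
      2 * fy t y * h t y + 2 * f t y * hy t y - hyy t y = -2 * ft t y) :
    ∀ t ∈ Icc (0:ℝ) T, ∀ y : ℝ,
      HasDerivWithinAt (fun s => phiFun f h hy s y)
        (-(Real.exp (Afun f h hy t) * Real.exp (-2 * ∫ x in (0:ℝ)..y, f t x)) * h t y)
        (Icc (0:ℝ) T) t := by
  intro t ht y
  exact phi_transport_equation_general ordConnected_Icc (left_mem_Icc.2 hT.le) hf_cont.continuousOn
    hf_t hft_cont hh_cont.continuousOn hh_y hhy_cont
    (fun s hs x ↦ ((((hf_y s hs x).const_mul 2).mul (hh_y s hs x)).sub (hh_yy s hs x)).congr_deriv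
      (hcompat s hs x)) ht y
end

section
/- Let T > 0 and let φ : [0, T] × ℝ → ℝ, f, h : [0, T] × ℝ → ℝ be functions such that φ has continuous partial derivatives φ_t, φ_y, φ_yy and the mixed partial ∂/∂y (φ_t) exists, and h has a partial derivative h_y. If φ_t(t, y) + φ_y(t, y) h(t, y) = 0 and f(t, y) φ_y(t, y) + (1/2) φ_yy(t, y) = 0 hold for all (t, y) ∈ [0, T] × ℝ, then ∂/∂y (φ_t)(t, y) = φ_y(t, y) · (2 f(t, y) h(t, y) − h_y(t, y)) for all (t, y) ∈ [0, T] × ℝ. -/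
open Set

open scoped Topology

theorem deriv_add_mul_eq_zero_of_eventually {𝕜 𝔸 : Type*} [NontriviallyNormedField 𝕜]
    [NormedRing 𝔸] [NormedAlgebra 𝕜 𝔸] {u v h : 𝕜 → 𝔸} {u' v' h' : 𝔸} {y : 𝕜}
    (hu : HasDerivAt u u' y) (hv : HasDerivAt v v' y) (hh : HasDerivAt h h' y)
    (heq : ∀ᶠ x in 𝓝 y, u x + v x * h x = 0) :
    u' + (v' * h y + v y * h') = 0 :=
  (hu.add (hv.mul hh)).unique ((hasDerivAt_const y (0 : 𝔸)).congr_of_eventuallyEq heq)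

-- Time is only a parameter of the identity: `φt`, `φy`, `h` are the slices at a fixed time.
theorem mixed_partial_identity_general {𝕜 : Type*} [NontriviallyNormedField 𝕜] [NeZero (2 : 𝕜)]
    {φt φy h : 𝕜 → 𝕜} {φty φyy hy f y : 𝕜}
    (hφty : HasDerivAt φt φty y) (hφyy : HasDerivAt φy φyy y) (hh_y : HasDerivAt h hy y)
    (heq1 : ∀ᶠ x in 𝓝 y, φt x + φy x * h x = 0)
    (heq2 : f * φy y + (1 / 2) * φyy = 0) :
    φty = φy y * (2 * f * h y - hy) := by
  have hderiv : φty + (φyy * h y + φy y * hy) = 0 :=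
    deriv_add_mul_eq_zero_of_eventually hφty hφyy hh_y heq1
  have hφyy_eq : φyy = -(2 * f * φy y) := by
    have htwo : (2 : 𝕜) ≠ 0 := NeZero.ne 2
    field_simp at heq2
    linear_combination heq2
  calc
    φty = -(φyy * h y + φy y * hy) := eq_neg_of_add_eq_zero_left hderiv
    _ = φy y * (2 * f * h y - hy) := by rw [hφyy_eq]; ring

/-- Intermediate identity (eqlt1): if `φ_t + φ_y h = 0` and `f φ_y + ½ φ_yy = 0` on
`[0,T] × ℝ`, then `∂/∂y (φ_t) = φ_y (2 f h - h_y)`. -/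
theorem mixed_partial_identity
    (T : ℝ) (hT : 0 < T)
    (φ φt φy φyy φty f h hy : ℝ → ℝ → ℝ)
    (hφt : ∀ t ∈ Icc (0:ℝ) T, ∀ y : ℝ,
      HasDerivWithinAt (fun s => φ s y) (φt t y) (Icc (0:ℝ) T) t)
    (hφy : ∀ t ∈ Icc (0:ℝ) T, ∀ y : ℝ, HasDerivAt (fun x => φ t x) (φy t y) y)
    (hφyy : ∀ t ∈ Icc (0:ℝ) T, ∀ y : ℝ, HasDerivAt (fun x => φy t x) (φyy t y) y)
    (hφty : ∀ t ∈ Icc (0:ℝ) T, ∀ y : ℝ, HasDerivAt (fun x => φt t x) (φty t y) y)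
    (hφt_cont : ContinuousOn (fun p : ℝ × ℝ => φt p.1 p.2) (Icc (0:ℝ) T ×ˢ univ))
    (hφy_cont : ContinuousOn (fun p : ℝ × ℝ => φy p.1 p.2) (Icc (0:ℝ) T ×ˢ univ))
    (hφyy_cont : ContinuousOn (fun p : ℝ × ℝ => φyy p.1 p.2) (Icc (0:ℝ) T ×ˢ univ))
    (hh_y : ∀ t ∈ Icc (0:ℝ) T, ∀ y : ℝ, HasDerivAt (fun x => h t x) (hy t y) y)
    (heq1 : ∀ t ∈ Icc (0:ℝ) T, ∀ y : ℝ, φt t y + φy t y * h t y = 0)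
    (heq2 : ∀ t ∈ Icc (0:ℝ) T, ∀ y : ℝ, f t y * φy t y + (1/2) * φyy t y = 0) :
    ∀ t ∈ Icc (0:ℝ) T, ∀ y : ℝ,
      φty t y = φy t y * (2 * f t y * h t y - hy t y) :=
  fun t ht y => mixed_partial_identity_general (hφty t ht y) (hφyy t ht y) (hh_y t ht y)
    (.of_forall (heq1 t ht)) (heq2 t ht y)
end
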